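/- arXiv:2602.09358 — 2 statements merged into one kernel-verified Lean document; each statement's English description precedes it below -/
import Mathlib

section
/- Let d ≥ 2, let E : Fin d → ℝ be injective, and let p : Fin d → ℝ be a probability distribution (p ≥ 0, Σ_i p(i) = 1) with mean ε = Σ_i p(i) E(i). Then there exist K ≤ d−1, and for each k ∈ {1,...,K} a diagonal operator M_k = Σ_i √(p(k|i)) |i⟩⟨i| on ℂ^d, where p(k|·) are conditional probabilities satisfying Σ_k p(k|i) = 1 for every i with p(i) > 0, such that for the family of unit vectors ψ_θ := Σ_i √(p(i)) e^{−iθE(i)} |i⟩ (θ ∈ ℝ): (a) the outcome probabilities p_k := ‖M_k ψ_θ‖² = Σ_i p(k|i) p(i) are independent of θ; (b) whenever p_k > 0, the normalized post-measurement state M_k ψ_θ / ‖M_k ψ_θ‖ has at most two nonzero coordinates; and (c) Σ_k p_k · [4(Σ_i p(i|k) E(i)² − (Σ_i p(i|k) E(i))²)] = 4(Σ_i p(i) E(i)² − (Σ_i p(i) E(i))²), where p(i|k) := p(k|i)p(i)/p_k. -/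
/-- The family of unit vectors `ψ_θ ∈ ℂ^d` with coordinates `√(p i) e^{-iθE i}`. -/
noncomputable def psiVec (d : ℕ) (p E : Fin d → ℝ) (θ : ℝ) : EuclideanSpace ℂ (Fin d) :=
  WithLp.toLp 2 fun i => (Real.sqrt (p i) : ℂ) * Complex.exp (-(Complex.I * θ * E i))

/-- The diagonal measurement operator `M_k = ∑ i √(p(k|i)) |i⟩⟨i|` on `ℂ^d`. -/
noncomputable def measOp (d K : ℕ) (pc : Fin K → Fin d → ℝ) (k : Fin K) :
    Matrix (Fin d) (Fin d) ℂ :=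
  Matrix.diagonal fun i => (Real.sqrt (pc k i) : ℂ)

lemma exists_pos_of_balanced {d : ℕ} (x w : Fin d → ℝ) (hx : Function.Injective x)
    (hw : ∀ i, 0 ≤ w i) (h0 : ∑ i, w i * x i = 0)
    (hc : 2 ≤ (Finset.univ.filter fun i => w i ≠ 0).card) : ∃ i, 0 < w i ∧ 0 < x i := by
  by_contra hcon
  push Not at hcon
  have hle : ∀ i ∈ Finset.univ, w i * x i ≤ 0 := by
    intro i _
    rcases (hw i).eq_or_lt with h | h
    · simp [← h]
    · exact mul_nonpos_of_nonneg_of_nonpos (hw i) (hcon i h)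
  have hz := (Finset.sum_eq_zero_iff_of_nonpos hle).1 h0
  obtain ⟨a, ha, b, hb, hab⟩ := Finset.one_lt_card.1 (show 1 < _ from hc)
  simp only [Finset.mem_filter, Finset.mem_univ, true_and] at ha hb
  have h1 := (mul_eq_zero.1 (hz a (Finset.mem_univ _))).resolve_left ha
  have h2 := (mul_eq_zero.1 (hz b (Finset.mem_univ _))).resolve_left hb
  exact hab (hx (h1.trans h2.symm))

lemma balanced_decomp {d : ℕ} (x : Fin d → ℝ) (hx : Function.Injective x) (n : ℕ) :
    ∀ w : Fin d → ℝ, (∀ i, 0 ≤ w i) → ∑ i, w i * x i = 0 →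
      (Finset.univ.filter fun i => w i ≠ 0).card ≤ n + 2 →
      ∃ q : Fin (n + 1) → Fin d → ℝ, (∀ k i, 0 ≤ q k i) ∧ (∀ i, ∑ k, q k i = w i) ∧
        (∀ k, ∑ i, q k i * x i = 0) ∧
        (∀ k, (Finset.univ.filter fun i => q k i ≠ 0).card ≤ 2) := by
  induction n with
  | zero =>
    intro w hw h0 hc
    exact ⟨fun _ => w, fun _ => hw, fun i => by simp, fun _ => h0, fun _ => hc⟩
  | succ n ih =>
    intro w hw h0 hc
    suffices H : ∃ r : Fin d → ℝ, (∀ i, 0 ≤ r i) ∧ (∀ i, r i ≤ w i) ∧ ∑ i, r i * x i = 0 ∧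
        (Finset.univ.filter fun i => r i ≠ 0).card ≤ 2 ∧
        (Finset.univ.filter fun i => w i - r i ≠ 0).card ≤ n + 2 by
      obtain ⟨r, hr0, hrw, hrx, hr2, hrc⟩ := H
      obtain ⟨q, hq0, hqs, hqx, hq2⟩ := ih (fun i => w i - r i)
        (fun i => sub_nonneg.2 (hrw i))
        (by simp only [sub_mul, Finset.sum_sub_distrib, h0, hrx, sub_zero]) hrc
      refine ⟨Fin.cons r q, ?_, ?_, ?_, ?_⟩
      · intro k; refine Fin.cases ?_ ?_ k
        · simpa using hr0
        · intro k; simpa using hq0 k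
      · intro i
        rw [Fin.sum_univ_succ]
        simp [hqs]
      · intro k; refine Fin.cases ?_ ?_ k
        · simpa using hrx
        · intro k; simpa using hqx k
      · intro k; refine Fin.cases ?_ ?_ k
        · simpa using hr2
        · intro k; simpa using hq2 k
    by_cases hcard : (Finset.univ.filter fun i => w i ≠ 0).card ≤ n + 2
    · exact ⟨fun _ => 0, by simp, hw, by simp, by simp, by simpa using hcard⟩
    obtain ⟨i, hwi, hxi⟩ := exists_pos_of_balanced x w hx hw h0 (by omega)
    obtain ⟨j, hwj, hxj⟩ := exists_pos_of_balanced (fun i => - x i) w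
      (fun a b h => hx (neg_injective h)) hw (by simp [h0]) (by omega)
    have hij : i ≠ j := by rintro rfl; linarith
    set t := min (w i * x i) (w j * (- x j)) with ht
    have ht0 : 0 ≤ t := le_min (by positivity) (mul_nonneg hwj.le hxj.le)
    set r : Fin d → ℝ := fun k => if k = i then t / x i else if k = j then t / (- x j) else 0
      with hr
    have hri : r i = t / x i := by simp [hr]
    have hrj : r j = t / (- x j) := by simp [hr, hij.symm]
    have hro : ∀ k, k ≠ i → k ≠ j → r k = 0 := by intro k h1 h2; simp [hr, h1, h2]
    have hrw : ∀ k, r k ≤ w k := by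
      intro k
      by_cases h1 : k = i
      · rw [h1, hri, div_le_iff₀ hxi]; exact min_le_left _ _
      by_cases h2 : k = j
      · rw [h2, hrj, div_le_iff₀ hxj]; exact min_le_right _ _
      rw [hro k h1 h2]; exact hw k
    refine ⟨r, ?_, hrw, ?_, ?_, ?_⟩
    · intro k
      by_cases h1 : k = i
      · rw [h1, hri]; positivity
      by_cases h2 : k = j
      · rw [h2, hrj]; exact div_nonneg ht0 hxj.le
      rw [hro k h1 h2]
    · rw [← Finset.sum_subset (Finset.subset_univ {i, j}), Finset.sum_pair hij, hri, hrj]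
      · have : x j ≠ 0 := by intro h; simp [h] at hxj
        field_simp
        ring
      · intro k _ hk
        simp only [Finset.mem_insert, Finset.mem_singleton, not_or] at hk
        rw [hro k hk.1 hk.2, zero_mul]
    · refine (Finset.card_le_card (t := {i, j}) ?_).trans Finset.card_le_two
      intro k hk
      simp only [Finset.mem_filter, Finset.mem_univ, true_and] at hk
      by_contra h
      simp only [Finset.mem_insert, Finset.mem_singleton, not_or] at h
      exact hk (hro k h.1 h.2)
    · obtain ⟨m, hm, hm'⟩ : ∃ m, w m ≠ 0 ∧ w m - r m = 0 := by
        rcases min_choice (w i * x i) (w j * (- x j)) with h | h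
        · refine ⟨i, hwi.ne', ?_⟩
          rw [hri, ht, h]; field_simp; ring
        · refine ⟨j, hwj.ne', ?_⟩
          have := hxj.ne'
          rw [hrj, ht, h, mul_div_assoc, div_self this]; ring
      have hsub : (Finset.univ.filter fun i => w i - r i ≠ 0) ⊆
          (Finset.univ.filter fun i => w i ≠ 0).erase m := by
        intro k hk
        simp only [Finset.mem_filter, Finset.mem_univ, true_and, Finset.mem_erase] at hk ⊢
        refine ⟨fun h => hk (h ▸ hm'), fun h => hk ?_⟩
        have h1 := hrw k
        have h2 : 0 ≤ r k := by
          by_cases h1 : k = i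
          · rw [h1, hri]; positivity
          by_cases h2 : k = j
          · rw [h2, hrj]; exact div_nonneg ht0 hxj.le
          rw [hro k h1 h2]
        linarith
      have := Finset.card_le_card hsub
      rw [Finset.card_erase_of_mem (by simp [hm])] at this
      omega

lemma measOp_apply (d K : ℕ) (pc : Fin K → Fin d → ℝ) (p E : Fin d → ℝ) (k : Fin K) (θ : ℝ)
    (i : Fin d) : Matrix.toEuclideanLin (measOp d K pc k) (psiVec d p E θ) i =
      (Real.sqrt (pc k i) : ℂ) *
        ((Real.sqrt (p i) : ℂ) * Complex.exp (-(Complex.I * θ * E i))) := by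
  simp [measOp, psiVec, Matrix.toLpLin_apply, Matrix.mulVec_diagonal]

/-- for `d ≥ 2`, injective `E : Fin d → ℝ` and a probability distribution
`p` on `Fin d`, there exist `K ≤ d - 1` and conditional probabilities `p(k|i)` (summing
to `1` over `k` whenever `p i > 0`) such that, for the diagonal measurement operators
`M_k = ∑ i √(p(k|i)) |i⟩⟨i|` and the family `ψ_θ = ∑ i √(p i) e^{-iθE i} |i⟩`:
(a) the outcome probabilities `‖M_k ψ_θ‖² = ∑ i p(k|i) p(i)` are independent of `θ`;
(b) whenever `p_k > 0`, the normalized post-measurement state `M_k ψ_θ / ‖M_k ψ_θ‖` has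
at most two nonzero coordinates; and
(c) the average quantum Fisher information of the post-measurement states equals the
quantum Fisher information `4·Var_p(E)` of `ψ_θ`. -/
theorem qfi_compression_into_one_qubit
    (d : ℕ) (hd : 2 ≤ d) (E : Fin d → ℝ) (hE : Function.Injective E)
    (p : Fin d → ℝ) (hp : ∀ i, 0 ≤ p i) (hpsum : ∑ i, p i = 1) :
    ∃ (K : ℕ), K ≤ d - 1 ∧
      ∃ pc : Fin K → Fin d → ℝ,
        (∀ k i, 0 ≤ pc k i) ∧
        (∀ i, 0 < p i → ∑ k, pc k i = 1) ∧
        -- (a) outcome probabilities are independent of θ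
        (∀ (k : Fin K) (θ : ℝ),
          ‖Matrix.toEuclideanLin (measOp d K pc k) (psiVec d p E θ)‖ ^ 2
            = ∑ i, pc k i * p i) ∧
        -- (b) the normalized post-measurement state fits in a single qubit
        (∀ (k : Fin K) (θ : ℝ), 0 < ∑ i, pc k i * p i →
          ({i | (‖Matrix.toEuclideanLin (measOp d K pc k) (psiVec d p E θ)‖⁻¹ •
              Matrix.toEuclideanLin (measOp d K pc k) (psiVec d p E θ)) i ≠ 0} :
            Set (Fin d)).ncard ≤ 2) ∧
        -- (c) the average QFI equals the original QFI
        (∑ k, (∑ i, pc k i * p i) *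
            (4 * ((∑ i, (pc k i * p i / (∑ j, pc k j * p j)) * E i ^ 2)
              - (∑ i, (pc k i * p i / (∑ j, pc k j * p j)) * E i) ^ 2))
          = 4 * ((∑ i, p i * E i ^ 2) - (∑ i, p i * E i) ^ 2)) := by
  obtain ⟨n, rfl⟩ : ∃ n, d = n + 2 := ⟨d - 2, by omega⟩
  set ε := ∑ i, p i * E i with hε
  obtain ⟨q, hq0, hqs, hqx, hq2⟩ := balanced_decomp (fun i => E i - ε)
    (fun a b h => hE (sub_left_injective h)) n p hp
    (by simp only [mul_sub, Finset.sum_sub_distrib, ← Finset.sum_mul, hpsum, ← hε]; ring)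
    ((Finset.card_le_univ _).trans (by simp))
  have hqp : ∀ k i, q k i / p i * p i = q k i := by
    intro k i
    by_cases h : p i = 0
    · have h1 := hqs i
      rw [h, Finset.sum_eq_zero_iff_of_nonneg (fun k _ => hq0 k i)] at h1
      simp [h1 k (Finset.mem_univ _)]
    · field_simp
  refine ⟨n + 1, by omega, fun k i => q k i / p i, fun k i => div_nonneg (hq0 k i) (hp i),
    ?_, ?_, ?_, ?_⟩
  · intro i hi
    rw [← Finset.sum_div, hqs, div_self hi.ne']
  · intro k θ
    rw [EuclideanSpace.norm_sq_eq]
    refine Finset.sum_congr rfl fun i _ => ?_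
    rw [measOp_apply]
    have he : ‖Complex.exp (-(Complex.I * θ * E i))‖ = 1 := by
      rw [Complex.norm_exp]; simp
    rw [norm_mul, norm_mul, he, mul_one, Complex.norm_real, Complex.norm_real, mul_pow,
      Real.norm_eq_abs, Real.norm_eq_abs, sq_abs, sq_abs,
      Real.sq_sqrt (div_nonneg (hq0 k i) (hp i)), Real.sq_sqrt (hp i)]
  · intro k θ _
    refine le_trans ?_ (hq2 k)
    rw [← Set.ncard_coe_finset]
    refine Set.ncard_le_ncard ?_ (Finset.finite_toSet _)
    intro i hi
    simp only [Finset.coe_filter, Finset.mem_univ, true_and, Set.mem_setOf_eq] at hi ⊢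
    intro h
    apply hi
    rw [PiLp.smul_apply, measOp_apply]
    simp [h]
  · simp only [hqp]
    have key : ∀ k, (∑ i, q k i) * (4 * ((∑ i, q k i / (∑ j, q k j) * E i ^ 2)
        - (∑ i, q k i / (∑ j, q k j) * E i) ^ 2))
        = 4 * ((∑ i, q k i * E i ^ 2) - (∑ i, q k i) * ε ^ 2) := by
      intro k
      have hx := hqx k
      simp only [mul_sub, Finset.sum_sub_distrib, ← Finset.sum_mul] at hx
      simp only [div_mul_eq_mul_div, ← Finset.sum_div]
      rw [sub_eq_zero.1 hx]
      by_cases h : ∑ i, q k i = 0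
      · have h1 := (Finset.sum_eq_zero_iff_of_nonneg (fun i _ => hq0 k i)).1 h
        have h2 : ∀ i, q k i = 0 := fun i => h1 i (Finset.mem_univ _)
        simp [h2]
      · field_simp
    rw [Finset.sum_congr rfl fun k _ => key k, ← Finset.mul_sum, Finset.sum_sub_distrib,
      ← Finset.sum_mul, Finset.sum_comm, Finset.sum_comm (f := fun k i => q k i)]
    simp only [← Finset.sum_mul, hqs, hpsum, one_mul]
end

section
/- For φ ∈ ℝ let e_φ := (1/√2)(|0⟩ + e^{iφ}|1⟩) ∈ ℂ², and for m ∈ {0,1} define the linear map A_m : ℂ² ⊗ ℂ² → ℂ² by A_m := (id ⊗ ⟨m|) ∘ CNOT, where CNOT|a⟩⊗|b⟩ = |a⟩⊗|a ⊕ b⟩. Then for all N ≥ 1, all phases θ₁,...,θ_N ∈ ℝ, and all outcome strings m₂,...,m_N ∈ {0,1}, the vector v obtained by iteratively applying v ← A_{m_j}(v ⊗ e_{θ_j}) for j = 2,...,N starting from v = e_{θ₁} satisfies v = c · 2^{−(N−1)/2} · e_{θ_tot}, where θ_tot = θ₁ + Σ_{j=2}^{N} (−1)^{m_j} θ_j and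 c ∈ ℂ is a unimodular scalar (|c| = 1). In particular ‖v‖² = 2^{−(N−1)}, so every outcome string occurs with probability 2^{−(N−1)}. -/
open scoped TensorProduct

/-- The standard basis vector `|a⟩` of `ℂ²`. -/
noncomputable def ket (a : Fin 2) : Fin 2 → ℂ := Pi.single a 1

/-- The equatorial qubit state `e_φ = (|0⟩ + e^{iφ}|1⟩)/√2`. -/
noncomputable def eqState (φ : ℝ) : Fin 2 → ℂ :=
  ((Real.sqrt 2 : ℝ) : ℂ)⁻¹ • (ket 0 + Complex.exp (Complex.I * φ) • ket 1)

theorem contraction_apply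
    (CNOT : (Fin 2 → ℂ) ⊗[ℂ] (Fin 2 → ℂ) →ₗ[ℂ] (Fin 2 → ℂ) ⊗[ℂ] (Fin 2 → ℂ))
    (hCNOT : ∀ a b : Fin 2,
      CNOT (ket a ⊗ₜ[ℂ] ket b) = ket a ⊗ₜ[ℂ] ket (a + b))
    (m : Fin 2) (v w : Fin 2 → ℂ) (a : Fin 2) :
    ((TensorProduct.rid ℂ (Fin 2 → ℂ)).toLinearMap
              ∘ₗ TensorProduct.map (LinearMap.id : (Fin 2 → ℂ) →ₗ[ℂ] (Fin 2 → ℂ))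
                    (LinearMap.proj m : (Fin 2 → ℂ) →ₗ[ℂ] ℂ)
              ∘ₗ CNOT) (v ⊗ₜ[ℂ] w) a = v a * w (a + m) := by
  have hv : ∀ u : Fin 2 → ℂ, u = u 0 • ket 0 + u 1 • ket 1 := by
    intro u
    ext i
    fin_cases i <;> simp [ket]
  conv_lhs => rw [hv v, hv w]
  simp only [TensorProduct.add_tmul, TensorProduct.tmul_add, TensorProduct.smul_tmul,
    TensorProduct.tmul_smul, map_add, map_smul, LinearMap.comp_apply, hCNOT,
    TensorProduct.map_tmul, LinearEquiv.coe_coe, TensorProduct.rid_tmul, LinearMap.id_apply,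
    LinearMap.proj_apply]
  fin_cases a <;> fin_cases m <;> simp [ket] <;> ring

theorem eqState_zero (φ : ℝ) : eqState φ 0 = ((Real.sqrt 2 : ℝ) : ℂ)⁻¹ := by
  simp [eqState, ket]

theorem eqState_one (φ : ℝ) :
    eqState φ 1 = ((Real.sqrt 2 : ℝ) : ℂ)⁻¹ * Complex.exp (Complex.I * φ) := by
  simp [eqState, ket]

theorem norm_exp_I (φ : ℝ) : ‖Complex.exp (Complex.I * φ)‖ = 1 := by
  rw [mul_comm]
  exact Complex.norm_exp_ofReal_mul_I φ

theorem normSq_eqState (φ : ℝ) : ∑ a, Complex.normSq (eqState φ a) = 1 := by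
  rw [Fin.sum_univ_two, eqState_zero, eqState_one]
  simp only [Complex.normSq_eq_norm_sq, norm_mul, norm_exp_I, norm_inv, Complex.norm_real]
  norm_num

theorem cascade_step (m : Fin 2) (φ θ : ℝ) : ∃ c : ℂ, ‖c‖ = 1 ∧
    (fun a => eqState φ a * eqState θ (a + m)) =
      (c * ((Real.sqrt 2 : ℝ) : ℂ)⁻¹) • eqState (φ + (-1 : ℝ) ^ (m : ℕ) * θ) := by
  fin_cases m
  · refine ⟨1, by simp, ?_⟩
    ext a
    fin_cases a
    · simp [eqState_zero]
    · simp [eqState_one, mul_add, Complex.exp_add]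
      ring
  · refine ⟨Complex.exp (Complex.I * θ), norm_exp_I θ, ?_⟩
    ext a
    fin_cases a
    · simp [eqState_zero, eqState_one]
      ring
    · have h : Complex.exp (Complex.I * θ) * Complex.exp (-(Complex.I * θ)) = 1 := by
        rw [← Complex.exp_add]; simp
      simp [eqState_zero, eqState_one, mul_add, Complex.exp_add]
      linear_combination (-(((Real.sqrt 2 : ℝ) : ℂ)⁻¹ ^ 2 * Complex.exp (Complex.I * φ))) * h

/-- CNOT-cascade compression.  Let `CNOT` act on the computational basis by
`CNOT(|a⟩⊗|b⟩) = |a⟩⊗|a ⊕ b⟩` and for `m : Fin 2` let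
`A m = (id ⊗ ⟨m|) ∘ CNOT : ℂ² ⊗ ℂ² → ℂ²` (partial contraction with `⟨m|`).  Starting from
`v 0 = e_{θ 0}` and iterating `v (j+1) = A (m (j+1)) (v j ⊗ e_{θ (j+1)})`, for every
`N ≥ 1` the vector `v (N-1)` equals `c · 2^{-(N-1)/2} · e_{θ_tot}` for a unimodular
scalar `c`, where `θ_tot = θ 0 + ∑_{j=1}^{N-1} (-1)^{m j} θ j`; in particular
`‖v (N-1)‖² = 2^{-(N-1)}`, so every outcome string occurs with probability
`2^{-(N-1)}`. -/
theorem cnot_cascade_compression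
    (CNOT : (Fin 2 → ℂ) ⊗[ℂ] (Fin 2 → ℂ) →ₗ[ℂ] (Fin 2 → ℂ) ⊗[ℂ] (Fin 2 → ℂ))
    (hCNOT : ∀ a b : Fin 2,
      CNOT (ket a ⊗ₜ[ℂ] ket b) = ket a ⊗ₜ[ℂ] ket (a + b))
    (A : Fin 2 → ((Fin 2 → ℂ) ⊗[ℂ] (Fin 2 → ℂ) →ₗ[ℂ] (Fin 2 → ℂ)))
    (hA : ∀ m : Fin 2,
      A m = (TensorProduct.rid ℂ (Fin 2 → ℂ)).toLinearMap
              ∘ₗ TensorProduct.map (LinearMap.id : (Fin 2 → ℂ) →ₗ[ℂ] (Fin 2 → ℂ))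
                    (LinearMap.proj m : (Fin 2 → ℂ) →ₗ[ℂ] ℂ)
              ∘ₗ CNOT)
    (N : ℕ) (hN : 1 ≤ N) (θ : ℕ → ℝ) (m : ℕ → Fin 2)
    (v : ℕ → (Fin 2 → ℂ))
    (hv0 : v 0 = eqState (θ 0))
    (hv : ∀ j, v (j + 1) = A (m (j + 1)) (v j ⊗ₜ[ℂ] eqState (θ (j + 1)))) :
    ∃ c : ℂ, ‖c‖ = 1 ∧
      v (N - 1) = (c * (((Real.sqrt 2 : ℝ) : ℂ)⁻¹ ^ (N - 1))) •
        eqState (θ 0 + ∑ j ∈ Finset.Ico 1 N, (-1 : ℝ) ^ ((m j : ℕ)) * θ j) ∧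
      ∑ a, Complex.normSq (v (N - 1) a) = (2 : ℝ)⁻¹ ^ (N - 1) := by
  obtain ⟨n, rfl⟩ : ∃ n, N = n + 1 := ⟨N - 1, by omega⟩
  simp only [Nat.add_sub_cancel]
  have key : ∃ c : ℂ, ‖c‖ = 1 ∧ v n = (c * (((Real.sqrt 2 : ℝ) : ℂ)⁻¹ ^ n)) •
        eqState (θ 0 + ∑ j ∈ Finset.Ico 1 (n + 1), (-1 : ℝ) ^ ((m j : ℕ)) * θ j) := by
    clear hN
    induction n with
    | zero => exact ⟨1, by simp, by simp [hv0]⟩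
    | succ n ih =>
      obtain ⟨c, hc, h⟩ := ih
      obtain ⟨d, hd, h2⟩ := cascade_step (m (n + 1))
        (θ 0 + ∑ j ∈ Finset.Ico 1 (n + 1), (-1 : ℝ) ^ ((m j : ℕ)) * θ j) (θ (n + 1))
      refine ⟨c * d, by simp [hc, hd], ?_⟩
      rw [Finset.sum_Ico_succ_top (by omega), ← add_assoc]
      ext a
      have h3 := congrFun h2 a
      rw [hv, hA, contraction_apply CNOT hCNOT, h]
      simp only [Pi.smul_apply, smul_eq_mul] at h3 ⊢
      rw [mul_assoc, h3]
      ring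
  obtain ⟨c, hc, h⟩ := key
  refine ⟨c, hc, h, ?_⟩
  rw [h]
  simp only [Pi.smul_apply, smul_eq_mul, Complex.normSq_mul]
  rw [← Finset.mul_sum, normSq_eqState]
  simp only [Complex.normSq_eq_norm_sq, hc, norm_inv, norm_pow, Complex.norm_real]
  rw [← pow_mul, mul_comm n 2, pow_mul]
  norm_num
end
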